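/- arXiv:2111.11792 — 2 statements merged into one kernel-verified Lean document; each statement's English description precedes it below -/
import Mathlib

section
/- Let d ≥ 1 be a natural number and let Δ be a real number with 0 < Δ < d/2. Then the function (x,y) ↦ (1+‖x‖²)^{Δ−d}·(1+‖y‖²)^{Δ−d}·‖x−y‖^{−2Δ} is Lebesgue integrable on ℝ^d × ℝ^d and ∫_{ℝ^d}∫_{ℝ^d} (1+‖x‖²)^{Δ−d}(1+‖y‖²)^{Δ−d}‖x−y‖^{−2Δ} dx dy = 2^{1−d}·π^{d+1/2}·Γ(d/2 − Δ)/(Γ((d+1)/2)·Γ(d − Δ)). (This is the double sphere integral of a two-point function of dimension Δ in stereographic coordinates; for Δ = d − ε it gives the dimensionally regularized melon vacuum integral, which vanishes as ε → 0 for d not even.) -/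
open Real MeasureTheory

open Set

theorem gamk {a r k : ℝ} (ha : 0 < a) (hr : 0 < r) (hk : 0 ≤ k) :
    ∫⁻ s in Ioi (0:ℝ), ENNReal.ofReal (k * (s ^ (a-1) * rexp (-(r * s))))
      = ENNReal.ofReal (k * (Gamma a * r ^ (-a))) := by
  have h1 := Real.integral_rpow_mul_exp_neg_mul_Ioi ha hr
  have hne : Gamma a * r ^ (-a) ≠ 0 := by
    have := Gamma_pos_of_pos ha
    positivity
  have h2 : ∫ s in Ioi (0:ℝ), (s ^ (a-1) * rexp (-(r * s))) = Gamma a * r ^ (-a) := by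
    rw [h1, Real.rpow_neg hr.le, one_div, Real.inv_rpow hr.le, mul_comm]
  have hint : Integrable (fun s : ℝ => k * (s ^ (a-1) * rexp (-(r * s)))) (volume.restrict (Ioi 0)) :=
    (not_imp_comm.1 integral_undef (by rw [h2]; exact hne)).const_mul k
  rw [← ofReal_integral_eq_lintegral_ofReal hint, integral_const_mul, h2]
  filter_upwards [ae_restrict_mem measurableSet_Ioi] with s hs
  have : (0:ℝ) < s := hs
  simp only [Pi.zero_apply]
  positivity

theorem betak {a c A B k : ℝ} (ha : 0 < a) (hc : a < c) (hA : 0 < A) (hB : 0 < B) (hk : 0 ≤ k) :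
    ∫⁻ u in Ioi (0:ℝ), ENNReal.ofReal (k * (u ^ (a-1) * (A + u * B) ^ (-c)))
      = ENNReal.ofReal (k * (Gamma a * Gamma (c - a) / Gamma c * (A ^ (a - c) * B ^ (-a)))) := by
  have hc0 : 0 < c := ha.trans hc
  have gc := Gamma_pos_of_pos hc0
  have ga := Gamma_pos_of_pos ha
  have gca := Gamma_pos_of_pos (sub_pos.2 hc)
  calc _ = ∫⁻ u in Ioi (0:ℝ), ∫⁻ w in Ioi (0:ℝ),
        ENNReal.ofReal (k * u ^ (a-1) / Gamma c * (w ^ (c-1) * rexp (-((A + u * B) * w)))) := by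
        refine setLIntegral_congr_fun measurableSet_Ioi fun u hu => ?_
        have hu : (0:ℝ) < u := hu
        beta_reduce
        rw [gamk hc0 (by positivity) (by positivity)]
        congr 1
        field_simp
    _ = ∫⁻ w in Ioi (0:ℝ), ∫⁻ u in Ioi (0:ℝ),
        ENNReal.ofReal (k * u ^ (a-1) / Gamma c * (w ^ (c-1) * rexp (-((A + u * B) * w)))) := by
        refine lintegral_lintegral_swap (Measurable.aemeasurable ?_)
        unfold Function.uncurry
        fun_prop
    _ = ∫⁻ w in Ioi (0:ℝ),
        ENNReal.ofReal ((k * (Gamma a / Gamma c) * B ^ (-a)) * (w ^ (c-a-1) * rexp (-(A * w)))) := by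
        refine setLIntegral_congr_fun measurableSet_Ioi fun w hw => ?_
        have hw : (0:ℝ) < w := hw
        beta_reduce
        trans ∫⁻ u in Ioi (0:ℝ), ENNReal.ofReal ((k / Gamma c * w ^ (c-1) * rexp (-(A*w))) *
          (u ^ (a-1) * rexp (-((B*w) * u))))
        · refine setLIntegral_congr_fun measurableSet_Ioi fun u hu => ?_
          beta_reduce
          rw [show -((A + u * B) * w) = -(A*w) + -((B*w) * u) by ring, Real.exp_add]
          congr 1
          ring
        · rw [gamk ha (by positivity) (by positivity), Real.mul_rpow hB.le hw.le,
            show c - a - 1 = (c-1) + (-a) by ring, Real.rpow_add hw]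
          congr 1
          ring
    _ = _ := by
        rw [gamk (sub_pos.2 hc) hA (by positivity), neg_sub]
        congr 1
        ring

theorem gauss0 (d : ℕ) {b : ℝ} (hb : 0 < b) (k : ℝ) (hk : 0 ≤ k) (z : EuclideanSpace ℝ (Fin d)) :
    ∫⁻ y : EuclideanSpace ℝ (Fin d), ENNReal.ofReal (k * rexp (-(b * ‖y - z‖^2)))
     = ENNReal.ofReal (k * (π / b) ^ ((d:ℝ)/2)) := by
  rw [lintegral_sub_right_eq_self (fun y => ENNReal.ofReal (k * rexp (-(b * ‖y‖^2)))) z]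
  have h := GaussianFourier.integral_rexp_neg_mul_sq_norm (V := EuclideanSpace ℝ (Fin d)) hb
  simp only [neg_mul, finrank_euclideanSpace, Fintype.card_fin] at h
  have hint : Integrable (fun y : EuclideanSpace ℝ (Fin d) => k * rexp (-(b * ‖y‖^2))) :=
    (not_imp_comm.1 integral_undef (by rw [h]; positivity)).const_mul k
  rw [← ofReal_integral_eq_lintegral_ofReal hint, integral_const_mul, h]
  exact Filter.Eventually.of_forall fun y => by simp only [Pi.zero_apply]; positivity

theorem gauss (d : ℕ) {s t u : ℝ} (hs : 0 < s) (ht : 0 < t) (hu : 0 < u) (k : ℝ) (hk : 0 ≤ k) :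
    ∫⁻ p : EuclideanSpace ℝ (Fin d) × EuclideanSpace ℝ (Fin d),
      ENNReal.ofReal (k * rexp (-(s * ‖p.1‖^2 + t * ‖p.2‖^2 + u * ‖p.1 - p.2‖^2)))
     = ENNReal.ofReal (k * (π ^ (d:ℝ) * (s * t + u * (s + t)) ^ (-((d:ℝ)/2)))) := by
  rw [Measure.volume_eq_prod, lintegral_prod _ (by fun_prop)]
  calc _ = ∫⁻ x : EuclideanSpace ℝ (Fin d), ENNReal.ofReal
        ((k * (π / (t+u)) ^ ((d:ℝ)/2)) * rexp (-((s + t * u / (t+u)) * ‖x - 0‖^2))) := by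
        refine lintegral_congr fun x => ?_
        trans ∫⁻ y : EuclideanSpace ℝ (Fin d), ENNReal.ofReal
          ((k * rexp (-((s + t * u / (t+u)) * ‖x‖^2))) * rexp (-((t+u) * ‖y - (u/(t+u)) • x‖^2)))
        · refine lintegral_congr fun y => ?_
          rw [mul_assoc, ← Real.exp_add]
          congr 3
          rw [norm_sub_sq_real, norm_sub_sq_real, norm_smul, inner_smul_right, real_inner_comm y x,
            mul_pow, Real.norm_eq_abs, sq_abs]
          field_simp
          ring
        · rw [gauss0 d (by positivity) _ (by positivity), sub_zero]
          congr 1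
          ring
    _ = _ := by
        rw [gauss0 d (by positivity) _ (by positivity), mul_assoc,
          ← Real.mul_rpow (by positivity) (by positivity)]
        have : π / (t+u) * (π / (s + t * u / (t+u))) = π^2 * (s * t + u * (s + t))⁻¹ := by
          field_simp
          ring
        rw [this, Real.mul_rpow (by positivity) (by positivity), Real.rpow_neg (by positivity),
          Real.inv_rpow (by positivity), ← Real.rpow_natCast π 2, ← Real.rpow_mul pi_pos.le]
        congr 4
        push_cast; ring

theorem diag_ae (d : ℕ) (hd : 1 ≤ d) :
    ∀ᵐ p : EuclideanSpace ℝ (Fin d) × EuclideanSpace ℝ (Fin d), p.1 ≠ p.2 := by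
  have : Nonempty (Fin d) := ⟨⟨0, hd⟩⟩
  have hm : MeasurableSet {p : EuclideanSpace ℝ (Fin d) × EuclideanSpace ℝ (Fin d) | p.1 = p.2} :=
    measurableSet_eq_fun measurable_fst measurable_snd
  rw [ae_iff]
  simp only [ne_eq, not_not]
  rw [Measure.volume_eq_prod, Measure.measure_prod_null hm]
  refine Filter.Eventually.of_forall fun x => ?_
  have : (Prod.mk x ⁻¹' {p : EuclideanSpace ℝ (Fin d) × EuclideanSpace ℝ (Fin d) | p.1 = p.2})
      = {x} := by
    ext y
    simp [eq_comm]
  beta_reduce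
  rw [this]
  simp

theorem Jk (d : ℕ) (hd : 1 ≤ d) {Δ : ℝ} (hΔ0 : 0 < Δ) (hΔd : Δ < (d : ℝ) / 2)
    {s t k : ℝ} (hs : 0 < s) (ht : 0 < t) (hk : 0 ≤ k) :
    ∫⁻ p : EuclideanSpace ℝ (Fin d) × EuclideanSpace ℝ (Fin d),
      ENNReal.ofReal (k * (rexp (-(s * ‖p.1‖^2 + t * ‖p.2‖^2)) * ‖p.1 - p.2‖ ^ (-(2 * Δ))))
     = ENNReal.ofReal (k * (π ^ (d:ℝ) * Gamma ((d:ℝ)/2 - Δ) / Gamma ((d:ℝ)/2) *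
        ((s * t) ^ (Δ - (d:ℝ)/2) * (s + t) ^ (-Δ)))) := by
  have gD := Gamma_pos_of_pos hΔ0
  calc _ = ∫⁻ p : EuclideanSpace ℝ (Fin d) × EuclideanSpace ℝ (Fin d), ∫⁻ u in Ioi (0:ℝ),
        ENNReal.ofReal (k / Gamma Δ * rexp (-(s * ‖p.1‖^2 + t * ‖p.2‖^2)) *
          (u ^ (Δ - 1) * rexp (-(‖p.1 - p.2‖^2 * u)))) := by
        refine lintegral_congr_ae ?_
        filter_upwards [diag_ae d hd] with p hp
        have hp' : 0 < ‖p.1 - p.2‖ := norm_pos_iff.2 (sub_ne_zero.2 hp)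
        rw [gamk hΔ0 (by positivity) (by positivity), ← Real.rpow_natCast ‖p.1 - p.2‖ 2,
          ← Real.rpow_mul hp'.le]
        congr 1
        rw [show ((2:ℕ):ℝ) * -Δ = -(2*Δ) by push_cast; ring]
        field_simp
    _ = ∫⁻ u in Ioi (0:ℝ), ∫⁻ p : EuclideanSpace ℝ (Fin d) × EuclideanSpace ℝ (Fin d),
        ENNReal.ofReal (k / Gamma Δ * rexp (-(s * ‖p.1‖^2 + t * ‖p.2‖^2)) *
          (u ^ (Δ - 1) * rexp (-(‖p.1 - p.2‖^2 * u)))) := by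
        refine lintegral_lintegral_swap (Measurable.aemeasurable ?_)
        unfold Function.uncurry
        fun_prop
    _ = ∫⁻ u in Ioi (0:ℝ), ENNReal.ofReal (k / Gamma Δ * π ^ (d:ℝ) *
          (u ^ (Δ - 1) * (s * t + u * (s + t)) ^ (-((d:ℝ)/2)))) := by
        refine setLIntegral_congr_fun measurableSet_Ioi fun u hu => ?_
        have hu : (0:ℝ) < u := hu
        trans ∫⁻ p : EuclideanSpace ℝ (Fin d) × EuclideanSpace ℝ (Fin d), ENNReal.ofReal
          ((k / Gamma Δ * u ^ (Δ - 1)) *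
            rexp (-(s * ‖p.1‖^2 + t * ‖p.2‖^2 + u * ‖p.1 - p.2‖^2)))
        · refine lintegral_congr fun p => ?_
          rw [neg_add _ (u * _), Real.exp_add, mul_comm u]
          congr 1
          ring
        · rw [gauss d hs ht hu _ (by positivity)]
          congr 1
          ring
    _ = _ := by
        rw [betak hΔ0 hΔd (by positivity) (by positivity) (by positivity)]
        congr 1
        field_simp

theorem st_int {p D k : ℝ} (hp : 0 < p) (hD : 0 < D) (hDp : D < 2 * p) (hk : 0 ≤ k) :
    ∫⁻ s in Ioi (0:ℝ), ∫⁻ t in Ioi (0:ℝ), ENNReal.ofReal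
      (k * (s ^ (p-1) * rexp (-s) * (t ^ (p-1) * rexp (-t)) * (s + t) ^ (-D)))
    = ENNReal.ofReal (k * (Gamma p ^ 2 * Gamma (2 * p - D) / Gamma (2 * p))) := by
  have gD := Gamma_pos_of_pos hD
  have gp := Gamma_pos_of_pos hp
  calc _ = ∫⁻ s in Ioi (0:ℝ), ∫⁻ t in Ioi (0:ℝ), ∫⁻ u in Ioi (0:ℝ), ENNReal.ofReal
          (k / Gamma D * (s ^ (p-1) * rexp (-s) * (t ^ (p-1) * rexp (-t))) *
        (u ^ (D - 1) * rexp (-((s + t) * u)))) := by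
        refine setLIntegral_congr_fun measurableSet_Ioi fun s hs => ?_
        refine setLIntegral_congr_fun measurableSet_Ioi fun t ht => ?_
        have hs : (0:ℝ) < s := hs
        have ht : (0:ℝ) < t := ht
        beta_reduce
        rw [gamk hD (by positivity) (by positivity)]
        congr 1
        field_simp
    _ = ∫⁻ s in Ioi (0:ℝ), ∫⁻ u in Ioi (0:ℝ), ∫⁻ t in Ioi (0:ℝ), ENNReal.ofReal
          (k / Gamma D * (s ^ (p-1) * rexp (-s) * (t ^ (p-1) * rexp (-t))) *
        (u ^ (D - 1) * rexp (-((s + t) * u)))) := by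
        refine lintegral_congr fun s => ?_
        refine lintegral_lintegral_swap (Measurable.aemeasurable ?_)
        unfold Function.uncurry
        fun_prop
    _ = ∫⁻ s in Ioi (0:ℝ), ∫⁻ u in Ioi (0:ℝ), ENNReal.ofReal
          (k / Gamma D * Gamma p * (s ^ (p-1) * rexp (-((1 + u) * s))) *
        (u ^ (D - 1) * (1 + u) ^ (-p))) := by
        refine setLIntegral_congr_fun measurableSet_Ioi fun s hs => ?_
        refine setLIntegral_congr_fun measurableSet_Ioi fun u hu => ?_
        have hs : (0:ℝ) < s := hs
        have hu : (0:ℝ) < u := hu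
        trans ∫⁻ t in Ioi (0:ℝ), ENNReal.ofReal
          (k / Gamma D * (s ^ (p-1) * rexp (-((1+u) * s))) * u ^ (D - 1) *
            (t ^ (p-1) * rexp (-((1+u) * t))))
        · refine lintegral_congr fun t => ?_
          rw [show -((1+u) * s) = -s + -(u * s) by ring, show -((1+u) * t) = -t + -(u * t) by ring,
            show -((s+t) * u) = -(u*s) + -(u * t) by ring, Real.exp_add, Real.exp_add, Real.exp_add]
          congr 1
          ring
        · rw [gamk hp (by positivity) (by positivity)]
          congr 1
          ring
    _ = ∫⁻ u in Ioi (0:ℝ), ∫⁻ s in Ioi (0:ℝ), ENNReal.ofReal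
          (k / Gamma D * Gamma p * (s ^ (p-1) * rexp (-((1 + u) * s))) *
        (u ^ (D - 1) * (1 + u) ^ (-p))) := by
        refine lintegral_lintegral_swap (Measurable.aemeasurable ?_)
        unfold Function.uncurry
        fun_prop
    _ = ∫⁻ u in Ioi (0:ℝ), ENNReal.ofReal
          (k / Gamma D * Gamma p ^ 2 * (u ^ (D - 1) * (1 + u * 1) ^ (-(2 * p)))) := by
        refine setLIntegral_congr_fun measurableSet_Ioi fun u hu => ?_
        have hu : (0:ℝ) < u := hu
        trans ∫⁻ s in Ioi (0:ℝ), ENNReal.ofReal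
          (k / Gamma D * Gamma p * (u ^ (D - 1) * (1 + u) ^ (-p)) *
            (s ^ (p-1) * rexp (-((1+u) * s))))
        · refine lintegral_congr fun t => ?_
          congr 1
          ring
        · rw [gamk hp (by positivity) (by positivity), mul_one,
            show -(2 * p) = -p + -p by ring, Real.rpow_add (by positivity)]
          congr 1
          ring
    _ = _ := by
        rw [betak hD hDp one_pos one_pos (by positivity)]
        congr 1
        simp only [Real.one_rpow]
        field_simp

theorem main_lint (d : ℕ) (hd : 1 ≤ d) {Δ : ℝ} (hΔ0 : 0 < Δ) (hΔd : Δ < (d : ℝ) / 2) :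
    ∫⁻ p : EuclideanSpace ℝ (Fin d) × EuclideanSpace ℝ (Fin d),
      ENNReal.ofReal ((1 + ‖p.1‖ ^ 2) ^ (Δ - (d : ℝ)) * (1 + ‖p.2‖ ^ 2) ^ (Δ - (d : ℝ)) *
          ‖p.1 - p.2‖ ^ (-(2 * Δ)))
     = ENNReal.ofReal (π ^ (d:ℝ) * Gamma ((d:ℝ)/2 - Δ) * Gamma ((d:ℝ)/2) /
        (Gamma ((d:ℝ) - Δ) * Gamma (d:ℝ))) := by
  have hd0 : (0:ℝ) < d := by exact_mod_cast hd
  have ha : 0 < (d:ℝ) - Δ := by linarith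
  have ga := Gamma_pos_of_pos ha
  have g1 := Gamma_pos_of_pos (sub_pos.2 hΔd)
  have g2 := Gamma_pos_of_pos (half_pos hd0)
  have g3 := Gamma_pos_of_pos hd0
  set a := (d:ℝ) - Δ with ha_def
  have hna : Δ - (d:ℝ) = -a := by rw [ha_def]; ring
  rw [hna]
  calc _ = ∫⁻ p : EuclideanSpace ℝ (Fin d) × EuclideanSpace ℝ (Fin d), ∫⁻ s in Ioi (0:ℝ),
          ENNReal.ofReal (1 / Gamma a * ((1 + ‖p.2‖ ^ 2) ^ (-a) * ‖p.1 - p.2‖ ^ (-(2 * Δ))) *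
        (s ^ (a-1) * rexp (-((1 + ‖p.1‖^2) * s)))) := by
        refine lintegral_congr fun p => ?_
        rw [gamk ha (by positivity) (by positivity)]
        congr 1
        field_simp
    _ = ∫⁻ s in Ioi (0:ℝ), ∫⁻ p : EuclideanSpace ℝ (Fin d) × EuclideanSpace ℝ (Fin d),
          ENNReal.ofReal (1 / Gamma a * ((1 + ‖p.2‖ ^ 2) ^ (-a) * ‖p.1 - p.2‖ ^ (-(2 * Δ))) *
        (s ^ (a-1) * rexp (-((1 + ‖p.1‖^2) * s)))) := by
        refine lintegral_lintegral_swap (Measurable.aemeasurable ?_)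
        unfold Function.uncurry
        fun_prop
    _ = ∫⁻ s in Ioi (0:ℝ), ∫⁻ p : EuclideanSpace ℝ (Fin d) × EuclideanSpace ℝ (Fin d),
      ∫⁻ t in Ioi (0:ℝ),
          ENNReal.ofReal (1 / Gamma a ^ 2 * ‖p.1 - p.2‖ ^ (-(2 * Δ)) *
        (s ^ (a-1) * rexp (-((1 + ‖p.1‖^2) * s))) *
        (t ^ (a-1) * rexp (-((1 + ‖p.2‖^2) * t)))) := by
        refine setLIntegral_congr_fun measurableSet_Ioi fun s hs => ?_
        have hs : (0:ℝ) < s := hs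
        refine lintegral_congr fun p => ?_
        rw [gamk ha (by positivity) (by positivity)]
        congr 1
        field_simp
    _ = ∫⁻ s in Ioi (0:ℝ), ∫⁻ t in Ioi (0:ℝ),
      ∫⁻ p : EuclideanSpace ℝ (Fin d) × EuclideanSpace ℝ (Fin d),
          ENNReal.ofReal (1 / Gamma a ^ 2 * ‖p.1 - p.2‖ ^ (-(2 * Δ)) *
        (s ^ (a-1) * rexp (-((1 + ‖p.1‖^2) * s))) *
        (t ^ (a-1) * rexp (-((1 + ‖p.2‖^2) * t)))) := by
        refine lintegral_congr fun s => ?_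
        refine lintegral_lintegral_swap (Measurable.aemeasurable ?_)
        unfold Function.uncurry
        fun_prop
    _ = ∫⁻ s in Ioi (0:ℝ), ∫⁻ t in Ioi (0:ℝ), ENNReal.ofReal
      (1 / Gamma a ^ 2 * (π ^ (d:ℝ) * Gamma ((d:ℝ)/2 - Δ) / Gamma ((d:ℝ)/2)) *
       (s ^ ((d:ℝ)/2-1) * rexp (-s) * (t ^ ((d:ℝ)/2-1) * rexp (-t)) * (s + t) ^ (-Δ))) := by
        refine setLIntegral_congr_fun measurableSet_Ioi fun s hs => ?_
        refine setLIntegral_congr_fun measurableSet_Ioi fun t ht => ?_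
        have hs : (0:ℝ) < s := hs
        have ht : (0:ℝ) < t := ht
        trans ∫⁻ p : EuclideanSpace ℝ (Fin d) × EuclideanSpace ℝ (Fin d), ENNReal.ofReal
          (1 / Gamma a ^ 2 * (s ^ (a-1) * rexp (-s)) * (t ^ (a-1) * rexp (-t)) *
            (rexp (-(s * ‖p.1‖^2 + t * ‖p.2‖^2)) * ‖p.1 - p.2‖ ^ (-(2 * Δ))))
        · refine lintegral_congr fun p => ?_
          rw [show -((1 + ‖p.1‖^2) * s) = -s + -(s * ‖p.1‖^2) by ring,
            show -((1 + ‖p.2‖^2) * t) = -t + -(t * ‖p.2‖^2) by ring, neg_add,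
            Real.exp_add, Real.exp_add, Real.exp_add]
          congr 1
          ring
        · rw [Jk d hd hΔ0 hΔd hs ht (by positivity), Real.mul_rpow hs.le ht.le,
            show (d:ℝ)/2 - 1 = (a - 1) + (Δ - (d:ℝ)/2) by rw [ha_def]; ring,
            Real.rpow_add hs, Real.rpow_add ht]
          congr 1
          ring
    _ = _ := by
        rw [st_int (half_pos hd0) hΔ0 (by linarith) (by positivity),
          show 2 * ((d:ℝ)/2) = d by ring]
        congr 1
        rw [← ha_def]
        field_simp

theorem melon_vacuum_integral (d : ℕ) (hd : 1 ≤ d) (Δ : ℝ)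
    (hΔ0 : 0 < Δ) (hΔd : Δ < (d : ℝ) / 2) :
    MeasureTheory.Integrable
      (fun p : EuclideanSpace ℝ (Fin d) × EuclideanSpace ℝ (Fin d) =>
        (1 + ‖p.1‖ ^ 2) ^ (Δ - (d : ℝ)) * (1 + ‖p.2‖ ^ 2) ^ (Δ - (d : ℝ)) *
          ‖p.1 - p.2‖ ^ (-(2 * Δ))) ∧
    ∫ x : EuclideanSpace ℝ (Fin d), ∫ y : EuclideanSpace ℝ (Fin d),
        (1 + ‖x‖ ^ 2) ^ (Δ - (d : ℝ)) * (1 + ‖y‖ ^ 2) ^ (Δ - (d : ℝ)) *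
          ‖x - y‖ ^ (-(2 * Δ))
      = (2 : ℝ) ^ (1 - (d : ℝ)) * π ^ ((d : ℝ) + 1 / 2) * Real.Gamma ((d : ℝ) / 2 - Δ) /
          (Real.Gamma (((d : ℝ) + 1) / 2) * Real.Gamma ((d : ℝ) - Δ)) := by
  have hd0 : (0:ℝ) < d := by exact_mod_cast hd
  have ga := Gamma_pos_of_pos (show 0 < (d:ℝ) - Δ by linarith)
  have g1 := Gamma_pos_of_pos (sub_pos.2 hΔd)
  have g2 := Gamma_pos_of_pos (half_pos hd0)
  have g3 := Gamma_pos_of_pos hd0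
  have g4 := Gamma_pos_of_pos (show 0 < ((d:ℝ)+1)/2 by linarith)
  have hnn : ∀ p : EuclideanSpace ℝ (Fin d) × EuclideanSpace ℝ (Fin d),
      0 ≤ (1 + ‖p.1‖ ^ 2) ^ (Δ - (d : ℝ)) * (1 + ‖p.2‖ ^ 2) ^ (Δ - (d : ℝ)) *
          ‖p.1 - p.2‖ ^ (-(2 * Δ)) := fun p => by positivity
  have hmeas : Measurable (fun p : EuclideanSpace ℝ (Fin d) × EuclideanSpace ℝ (Fin d) =>
        (1 + ‖p.1‖ ^ 2) ^ (Δ - (d : ℝ)) * (1 + ‖p.2‖ ^ 2) ^ (Δ - (d : ℝ)) *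
          ‖p.1 - p.2‖ ^ (-(2 * Δ))) := by fun_prop
  have hl := main_lint d hd hΔ0 hΔd
  have hint : MeasureTheory.Integrable
      (fun p : EuclideanSpace ℝ (Fin d) × EuclideanSpace ℝ (Fin d) =>
        (1 + ‖p.1‖ ^ 2) ^ (Δ - (d : ℝ)) * (1 + ‖p.2‖ ^ 2) ^ (Δ - (d : ℝ)) *
          ‖p.1 - p.2‖ ^ (-(2 * Δ))) := by
    refine ⟨hmeas.aestronglyMeasurable, ?_⟩
    rw [hasFiniteIntegral_iff_ofReal (Filter.Eventually.of_forall hnn), hl]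
    exact ENNReal.ofReal_lt_top
  refine ⟨hint, ?_⟩
  have h2 := integral_prod _ hint
  rw [← Measure.volume_eq_prod, integral_eq_lintegral_of_nonneg_ae
    (Filter.Eventually.of_forall hnn) hmeas.aestronglyMeasurable, hl,
    ENNReal.toReal_ofReal (by positivity)] at h2
  rw [← h2]
  have h3 := Real.Gamma_mul_Gamma_add_half ((d:ℝ)/2)
  rw [show (d:ℝ)/2 + 1/2 = ((d:ℝ)+1)/2 by ring, show 2 * ((d:ℝ)/2) = d by ring] at h3
  rw [Real.rpow_add pi_pos, ← Real.sqrt_eq_rpow, div_eq_div_iff (by positivity) (by positivity)]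
  linear_combination (π ^ (d:ℝ) * Gamma ((d:ℝ)/2 - Δ) * Gamma ((d:ℝ) - Δ)) * h3
end

section
/- Let s and w be real numbers with s > 0 and w < 2s. Then the function (α,β) ↦ e^{−α−β}·(αβ)^{s−1}·(α+β)^{−w} is Lebesgue integrable on (0,∞) × (0,∞) and ∫₀^∞∫₀^∞ e^{−α−β}(αβ)^{s−1}(α+β)^{−w} dα dβ = Γ(s)²·Γ(2s − w)/Γ(2s). -/
open Real MeasureTheory

noncomputable def dsJ (s : ℝ) : ENNReal :=
  ∫⁻ u in Set.Ioi (0:ℝ), ENNReal.ofReal (u ^ (s-1) * (1+u) ^ (-(2*s)))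

lemma ds_subst (f : ℝ → ENNReal) (a : ℝ) (ha : 0 < a) :
    ∫⁻ β in Set.Ioi (0:ℝ), f β = ∫⁻ u in Set.Ioi (0:ℝ), ENNReal.ofReal a * f (a * u) := by
  have h := lintegral_image_eq_lintegral_abs_deriv_mul (s := Set.Ioi (0:ℝ)) (f := fun u => a * u)
    (f' := fun _ => a) measurableSet_Ioi
    (fun x _ => by simpa using ((hasDerivAt_id x).const_mul a).hasDerivWithinAt)
    (fun x _ y _ hxy => mul_left_cancel₀ ha.ne' hxy) f
  have him : (fun u => a * u) '' Set.Ioi (0:ℝ) = Set.Ioi 0 := by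
    ext x
    constructor
    · rintro ⟨y, hy, rfl⟩
      exact mul_pos ha hy
    · intro hx
      exact ⟨x / a, div_pos hx ha, by field_simp⟩
  rw [him, abs_of_pos ha] at h
  exact h

lemma ds_gamma (a r : ℝ) (ha : 0 < a) (hr : 0 < r) :
    ∫⁻ t in Set.Ioi (0:ℝ), ENNReal.ofReal (t ^ (a-1) * exp (-(r*t)))
      = ENNReal.ofReal ((1/r) ^ a * Gamma a) := by
  have h := Real.integral_rpow_mul_exp_neg_mul_Ioi ha hr
  rw [← h, ofReal_integral_eq_lintegral_ofReal]
  · apply Integrable.of_integral_ne_zero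
    rw [h]
    have := Gamma_pos_of_pos ha
    positivity
  · filter_upwards [ae_restrict_mem measurableSet_Ioi] with t ht
    have : (0:ℝ) < t := ht
    simp only [Pi.zero_apply]
    positivity

lemma ds_main (s w : ℝ) (hw : w < 2 * s) :
    ∫⁻ α in Set.Ioi (0:ℝ), ∫⁻ β in Set.Ioi (0:ℝ),
      ENNReal.ofReal (exp (-α - β) * (α * β) ^ (s - 1) * (α + β) ^ (-w))
      = dsJ s * ENNReal.ofReal (Gamma (2*s-w)) := by
  have h1 : ∫⁻ α in Set.Ioi (0:ℝ), ∫⁻ β in Set.Ioi (0:ℝ),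
      ENNReal.ofReal (exp (-α - β) * (α * β) ^ (s - 1) * (α + β) ^ (-w))
      = ∫⁻ α in Set.Ioi (0:ℝ), ∫⁻ u in Set.Ioi (0:ℝ), ENNReal.ofReal α *
      ENNReal.ofReal (exp (-α - α*u) * (α * (α*u)) ^ (s - 1) * (α + α*u) ^ (-w)) := by
    apply setLIntegral_congr_fun measurableSet_Ioi
    intro α hα
    exact ds_subst _ α hα
  rw [h1, lintegral_lintegral_swap (by
    apply Measurable.aemeasurable
    unfold Function.uncurry
    fun_prop)]
  have hG : 0 < Gamma (2*s-w) := Gamma_pos_of_pos (by linarith)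
  rw [dsJ, ← lintegral_mul_const _ (by fun_prop)]
  apply setLIntegral_congr_fun measurableSet_Ioi
  intro u hu
  have hu : (0:ℝ) < u := hu
  have h1u : 0 < 1 + u := by linarith
  have h2 : ∀ α ∈ Set.Ioi (0:ℝ), ENNReal.ofReal α *
      ENNReal.ofReal (exp (-α - α*u) * (α * (α*u)) ^ (s - 1) * (α + α*u) ^ (-w))
      = ENNReal.ofReal (u^(s-1) * (1+u)^(-w)) *
        ENNReal.ofReal (α ^ ((2*s-w)-1) * exp (-((1+u)*α))) := by
    intro α hα
    have hα : (0:ℝ) < α := hα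
    rw [← ENNReal.ofReal_mul hα.le, ← ENNReal.ofReal_mul (by positivity)]
    congr 1
    have e1 : α + α * u = α * (1+u) := by ring
    have e2 : -α - α*u = -((1+u)*α) := by ring
    have e3 : α ^ ((2*s-w)-1) = α * (α^(s-1) * α^(s-1)) * α^(-w) := by
      nth_rewrite 2 [← rpow_one α]
      rw [← rpow_add hα, ← rpow_add hα, ← rpow_add hα]
      congr 1; ring
    rw [e1, e2, e3, mul_rpow hα.le (by positivity), mul_rpow hα.le hu.le, mul_rpow hα.le h1u.le]
    ring
  simp only
  rw [setLIntegral_congr_fun measurableSet_Ioi h2, lintegral_const_mul _ (by fun_prop),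
    ds_gamma _ _ (by linarith) h1u, ← ENNReal.ofReal_mul (by positivity),
    ← ENNReal.ofReal_mul (by positivity)]
  congr 1
  have e4 : (1+u)^(-(2*s)) = (1+u)^(-w) * (1/(1+u))^(2*s-w) := by
    rw [one_div, inv_rpow h1u.le, ← rpow_neg h1u.le, ← rpow_add h1u]
    congr 1; ring
  rw [e4]; ring

lemma ds_J (s : ℝ) (hs : 0 < s) : dsJ s = ENNReal.ofReal (Gamma s ^ 2 / Gamma (2*s)) := by
  have hG : 0 < Gamma (2*s) := Gamma_pos_of_pos (by linarith)
  have hg : 0 < Gamma s := Gamma_pos_of_pos hs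
  have h := ds_main s 0 (by linarith)
  have h0 : ∫⁻ t in Set.Ioi (0:ℝ), ENNReal.ofReal (t ^ (s-1) * exp (-t))
      = ENNReal.ofReal (Gamma s) := by simpa using ds_gamma s 1 hs one_pos
  have h2 : ∫⁻ α in Set.Ioi (0:ℝ), ∫⁻ β in Set.Ioi (0:ℝ),
      ENNReal.ofReal (exp (-α - β) * (α * β) ^ (s - 1) * (α + β) ^ (-(0:ℝ)))
      = ENNReal.ofReal (Gamma s) * ENNReal.ofReal (Gamma s) := by
    nth_rewrite 1 [← h0]
    rw [← lintegral_mul_const _ (by fun_prop)]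
    apply setLIntegral_congr_fun measurableSet_Ioi
    intro α hα
    have hα : (0:ℝ) < α := hα
    simp only
    rw [← h0, ← lintegral_const_mul _ (by fun_prop)]
    apply setLIntegral_congr_fun measurableSet_Ioi
    intro β hβ
    have hβ : (0:ℝ) < β := hβ
    simp only
    rw [← ENNReal.ofReal_mul (by positivity), mul_rpow hα.le hβ.le, sub_eq_add_neg, exp_add,
      neg_zero, rpow_zero]
    congr 1; ring
  rw [h2, sub_zero, ← ENNReal.ofReal_mul hg.le] at h
  rw [ENNReal.ofReal_div_of_pos hG, ENNReal.eq_div_iff (by simpa using hG) ENNReal.ofReal_ne_top,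
    sq, h, mul_comm]

theorem double_schwinger_integral (s w : ℝ) (hs : 0 < s) (hw : w < 2 * s) :
    MeasureTheory.IntegrableOn
      (fun p : ℝ × ℝ => Real.exp (-p.1 - p.2) * (p.1 * p.2) ^ (s - 1) * (p.1 + p.2) ^ (-w))
      (Set.Ioi 0 ×ˢ Set.Ioi 0) ∧
    ∫ α in Set.Ioi (0 : ℝ), ∫ β in Set.Ioi (0 : ℝ),
        Real.exp (-α - β) * (α * β) ^ (s - 1) * (α + β) ^ (-w)
      = Real.Gamma s ^ 2 * Real.Gamma (2 * s - w) / Real.Gamma (2 * s) := by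
  have hG : 0 < Gamma (2*s) := Gamma_pos_of_pos (by linarith)
  have hGw : 0 < Gamma (2*s-w) := Gamma_pos_of_pos (by linarith)
  have h := ds_main s w hw
  rw [ds_J s hs, ← ENNReal.ofReal_mul (by positivity)] at h
  have hm : Measurable (fun p : ℝ × ℝ =>
      Real.exp (-p.1 - p.2) * (p.1 * p.2) ^ (s - 1) * (p.1 + p.2) ^ (-w)) := by fun_prop
  have hP : ∫⁻ p in Set.Ioi (0:ℝ) ×ˢ Set.Ioi (0:ℝ), ENNReal.ofReal
      (Real.exp (-p.1 - p.2) * (p.1 * p.2) ^ (s - 1) * (p.1 + p.2) ^ (-w))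
      = ENNReal.ofReal (Gamma s ^ 2 / Gamma (2*s) * Gamma (2*s-w)) := by
    rw [← h, Measure.volume_eq_prod, ← Measure.prod_restrict, lintegral_prod _ (by fun_prop)]
  have hnn : 0 ≤ᵐ[volume.restrict (Set.Ioi (0:ℝ) ×ˢ Set.Ioi (0:ℝ))] (fun p : ℝ × ℝ =>
      Real.exp (-p.1 - p.2) * (p.1 * p.2) ^ (s - 1) * (p.1 + p.2) ^ (-w)) := by
    filter_upwards [ae_restrict_mem (measurableSet_Ioi.prod measurableSet_Ioi)] with p hp
    have h1 : 0 < p.1 := hp.1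
    have h2 : 0 < p.2 := hp.2
    simp only [Pi.zero_apply]
    positivity
  have hI : MeasureTheory.IntegrableOn
      (fun p : ℝ × ℝ => Real.exp (-p.1 - p.2) * (p.1 * p.2) ^ (s - 1) * (p.1 + p.2) ^ (-w))
      (Set.Ioi 0 ×ˢ Set.Ioi 0) := by
    refine ⟨hm.aestronglyMeasurable, ?_⟩
    rw [hasFiniteIntegral_iff_ofReal hnn, hP]
    exact ENNReal.ofReal_lt_top
  refine ⟨hI, ?_⟩
  have h3 := integral_eq_lintegral_of_nonneg_ae hnn hm.aestronglyMeasurable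
  rw [hP, ENNReal.toReal_ofReal (by positivity)] at h3
  rw [Measure.volume_eq_prod, setIntegral_prod _ (by rwa [← Measure.volume_eq_prod])] at h3
  rw [h3]; ring
end
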